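/- Let s ∈ (0,1), u ∈ C_c^∞(ℝⁿ), and let U be its Caffarelli–Silvestre extension. Then for every compact set K ⊂ ℝⁿ, sup_{x ∈ K} | z^{−2s} ( U(x,z) − u(x) ) + (2s β_s)^{−1} (−Δ)^s u(x) | → 0 as z → 0⁺; that is, U(x,z) = u(x) − ( z^{2s} / (2s β_s) ) (−Δ)^s u(x) + o(z^{2s}) uniformly on compact subsets of ℝⁿ. -/

import Mathlib

open MeasureTheory Filter Set
open scoped Topology ENNReal NNReal

noncomputable section

/-- `ℝⁿ` with the Euclidean norm. -/
abbrev En (n : ℕ) := EuclideanSpace ℝ (Fin n)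

/-- The normalizing constant `p(n,s) = Γ(n/2+s)/(π^{n/2} Γ(s))` of the Poisson kernel. -/
def pns (n : ℕ) (s : ℝ) : ℝ :=
  Real.Gamma ((n : ℝ) / 2 + s) / (Real.pi ^ ((n : ℝ) / 2) * Real.Gamma s)

/-- The fractional Poisson kernel `P_z^{(s)}(x) = p(n,s) z^{2s} (|x|² + z²)^{-(n+2s)/2}`. -/
def Pker (n : ℕ) (s z : ℝ) (x : En n) : ℝ :=
  pns n s * z ^ (2 * s) * (‖x‖ ^ 2 + z ^ 2) ^ (-((n : ℝ) + 2 * s) / 2)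

/-- Convolution with the fractional Poisson kernel in the first variable, at fixed `z`. -/
def Pconv (n : ℕ) (s z : ℝ) (f : En n → ℝ) (x : En n) : ℝ :=
  ∫ y, Pker n s z (x - y) * f y

/-- The Caffarelli–Silvestre extension `U(x,z) = (P_z^{(s)} ∗ u)(x)`. -/
def CSext (n : ℕ) (s : ℝ) (u : En n → ℝ) (x : En n) (z : ℝ) : ℝ :=
  Pconv n s z u x

/-- The constant `C(n,s) = 4^s Γ(n/2+s) / (π^{n/2} |Γ(-s)|)`. -/
def Cns (n : ℕ) (s : ℝ) : ℝ :=
  4 ^ s * Real.Gamma ((n : ℝ) / 2 + s) / (Real.pi ^ ((n : ℝ) / 2) * |Real.Gamma (-s)|)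

/-- The fractional Laplacian `(-Δ)^s w(x)` as a principal-value singular integral. -/
def fracLap (n : ℕ) (s : ℝ) (w : En n → ℝ) (x : En n) : ℝ :=
  Cns n s * limUnder (𝓝[>] (0 : ℝ))
    (fun ε : ℝ => ∫ y in {y : En n | ε < ‖x - y‖}, (w x - w y) / ‖x - y‖ ^ ((n : ℝ) + 2 * s))

/-- `Λ^s w := -(-Δ)^s w`. -/
def Lam (n : ℕ) (s : ℝ) (w : En n → ℝ) (x : En n) : ℝ := - fracLap n s w x

/-- The first-order carré du champ `Γ₁(u,v) = ½(Λ^s(uv) - u Λ^s v - v Λ^s u)`. -/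
def Gamma1 (n : ℕ) (s : ℝ) (u v : En n → ℝ) (x : En n) : ℝ :=
  (Lam n s (fun y => u y * v y) x - u x * Lam n s v x - v x * Lam n s u x) / 2

/-- The constant `β_s = 2^{2s-1} Γ(s)/Γ(1-s)`. -/
def betaS (s : ℝ) : ℝ := 2 ^ (2 * s - 1) * Real.Gamma s / Real.Gamma (1 - s)

/-- Partial derivative in the `i`-th coordinate direction. -/
def pd {n : ℕ} (i : Fin n) (f : En n → ℝ) (x : En n) : ℝ :=
  fderiv ℝ f x (EuclideanSpace.single i 1)

/-- The Laplacian in the `x`-variables. -/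
def lapX {n : ℕ} (f : En n → ℝ) (x : En n) : ℝ := ∑ i, pd i (pd i f) x

/-- The degenerate operator `L_s W = div_{x,z}(z^{1-2s} ∇̃W)`, written out as
`z^{1-2s} Δ_x W + ∂_z(z^{1-2s} ∂_z W)`. -/
def LsOp {n : ℕ} (s : ℝ) (W : En n → ℝ → ℝ) (x : En n) (z : ℝ) : ℝ :=
  z ^ (1 - 2 * s) * lapX (fun y => W y z) x
    + deriv (fun t => t ^ (1 - 2 * s) * deriv (W x) t) z

lemma aux_finrank (n : ℕ) : Module.finrank ℝ (En n) = n := by simp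

lemma gammaKer_integrable {a r : ℝ} (ha : 0 < a) (hr : 0 < r) :
    IntegrableOn (fun t : ℝ => t ^ (a - 1) * Real.exp (-(r * t))) (Ioi 0) := by
  apply MeasureTheory.Integrable.of_integral_ne_zero
  rw [Real.integral_rpow_mul_exp_neg_mul_Ioi ha hr]
  have := Real.Gamma_pos_of_pos ha
  positivity

lemma gauss_integral (n : ℕ) {t : ℝ} (ht : 0 < t) :
    ∫ x : En n, Real.exp (-t * ‖x‖ ^ 2) = (Real.pi / t) ^ ((n : ℝ) / 2) := by
  rw [GaussianFourier.integral_rexp_neg_mul_sq_norm ht, aux_finrank]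

lemma gauss_integrable (n : ℕ) {t : ℝ} (ht : 0 < t) :
    Integrable (fun x : En n => Real.exp (-t * ‖x‖ ^ 2)) := by
  apply MeasureTheory.Integrable.of_integral_ne_zero
  rw [gauss_integral n ht]
  have := Real.pi_pos
  positivity

lemma ker_inner (n : ℕ) (s z t : ℝ) (ht : 0 < t) :
    ∫ x : En n, t ^ ((n : ℝ) / 2 + s - 1) * Real.exp (-((‖x‖ ^ 2 + z ^ 2) * t))
      = Real.pi ^ ((n : ℝ) / 2) * (t ^ (s - 1) * Real.exp (-(z ^ 2 * t))) := by
  have h : ∀ x : En n, t ^ ((n : ℝ) / 2 + s - 1) * Real.exp (-((‖x‖ ^ 2 + z ^ 2) * t))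
      = (t ^ ((n : ℝ) / 2 + s - 1) * Real.exp (-(z ^ 2 * t))) * Real.exp (-t * ‖x‖ ^ 2) := by
    intro x
    rw [mul_assoc, ← Real.exp_add]
    congr 2
    ring
  simp_rw [h]
  rw [integral_const_mul, gauss_integral n ht, Real.div_rpow Real.pi_pos.le ht.le,
    show (n : ℝ) / 2 + s - 1 = (s - 1) + (n : ℝ) / 2 by ring, Real.rpow_add ht]
  have : t ^ ((n : ℝ) / 2) ≠ 0 := (Real.rpow_pos_of_pos ht _).ne'
  field_simp

lemma ker_integral (n : ℕ) (s z : ℝ) (hs : 0 < s) (hz : 0 < z) :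
    ∫ x : En n, (‖x‖ ^ 2 + z ^ 2) ^ (-((n : ℝ) + 2 * s) / 2)
      = z ^ (-(2 * s)) * (Real.pi ^ ((n : ℝ) / 2) * Real.Gamma s / Real.Gamma ((n : ℝ) / 2 + s)) := by
  set a : ℝ := (n : ℝ) / 2 + s with ha
  have ha0 : 0 < a := by positivity
  have hG := Real.Gamma_pos_of_pos ha0
  have hGs := Real.Gamma_pos_of_pos hs
  let F : En n → ℝ → ℝ := fun x t => t ^ (a - 1) * Real.exp (-((‖x‖ ^ 2 + z ^ 2) * t))
  have hz2 : 0 < z ^ 2 := by positivity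
  have h1 : ∀ x : En n, ∫ t in Ioi (0 : ℝ), F x t
      = (‖x‖ ^ 2 + z ^ 2) ^ (-((n : ℝ) + 2 * s) / 2) * Real.Gamma a := by
    intro x
    have hp : 0 < ‖x‖ ^ 2 + z ^ 2 := by positivity
    simp only [F]
    rw [Real.integral_rpow_mul_exp_neg_mul_Ioi ha0 hp, one_div, Real.inv_rpow hp.le,
      ← Real.rpow_neg hp.le]
    congr 2
    rw [ha]; ring
  have hint : Integrable (Function.uncurry F)
      ((volume : Measure (En n)).prod (volume.restrict (Ioi (0 : ℝ)))) := by
    rw [integrable_prod_iff']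
    · constructor
      · refine (ae_restrict_iff' measurableSet_Ioi).2 (Eventually.of_forall fun t ht => ?_)
        have ht : 0 < t := ht
        apply MeasureTheory.Integrable.of_integral_ne_zero
        have := ker_inner n s z t ht
        simp only [Function.uncurry, F]
        rw [this]
        have := Real.pi_pos
        positivity
      · have h2 : IntegrableOn (fun t : ℝ => Real.pi ^ ((n : ℝ) / 2) *
            (t ^ (s - 1) * Real.exp (-(z ^ 2 * t)))) (Ioi 0) :=
          (gammaKer_integrable hs hz2).const_mul _
        refine IntegrableOn.congr_fun h2 (fun t ht => ?_) measurableSet_Ioi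
        have ht : 0 < t := ht
        rw [← ker_inner n s z t ht]
        refine integral_congr_ae (Eventually.of_forall fun x => ?_)
        simp only [Function.uncurry, F]
        rw [Real.norm_of_nonneg]
        positivity
    · apply Measurable.aestronglyMeasurable
      simp only [Function.uncurry_def, F]
      fun_prop
  have h3 := integral_integral_swap hint
  simp_rw [h1] at h3
  rw [integral_mul_const] at h3
  have h4 : ∫ t in Ioi (0 : ℝ), ∫ x : En n, F x t
      = Real.pi ^ ((n : ℝ) / 2) * ((1 / z ^ 2) ^ s * Real.Gamma s) := by
    rw [← Real.integral_rpow_mul_exp_neg_mul_Ioi hs hz2, ← integral_const_mul]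
    exact setIntegral_congr_fun measurableSet_Ioi fun t ht => ker_inner n s z t ht
  rw [h4] at h3
  have h5 : (1 / z ^ 2) ^ s = z ^ (-(2 * s)) := by
    rw [one_div, Real.inv_rpow hz2.le, Real.rpow_neg hz.le, Real.rpow_mul hz.le]
    norm_num
  rw [h5] at h3
  rw [← mul_div_assoc, eq_div_iff hG.ne', h3]
  ring

lemma ker_integrable (n : ℕ) (s z : ℝ) (hs : 0 < s) (hz : 0 < z) :
    Integrable (fun x : En n => (‖x‖ ^ 2 + z ^ 2) ^ (-((n : ℝ) + 2 * s) / 2)) := by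
  apply MeasureTheory.Integrable.of_integral_ne_zero
  rw [ker_integral n s z hs hz]
  have h0 : 0 < (n : ℝ) / 2 + s := by positivity
  have := Real.Gamma_pos_of_pos h0
  have := Real.Gamma_pos_of_pos hs
  have := Real.pi_pos
  positivity

lemma const_id (n : ℕ) (s : ℝ) (hs0 : 0 < s) (hs1 : s < 1) :
    1 / (2 * s * betaS s) * Cns n s = pns n s := by
  have h0 : 0 < (n : ℝ) / 2 + s := by positivity
  have hG1 := Real.Gamma_pos_of_pos h0
  have hGs := Real.Gamma_pos_of_pos hs0
  have hG2 := Real.Gamma_pos_of_pos (sub_pos.2 hs1)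
  have hpi : 0 < Real.pi ^ ((n : ℝ) / 2) := Real.rpow_pos_of_pos Real.pi_pos _
  have h1 : |Real.Gamma (-s)| = Real.Gamma (1 - s) / s := by
    have := Real.Gamma_add_one (neg_ne_zero.2 hs0.ne')
    rw [show -s + 1 = 1 - s by ring] at this
    have h2 : Real.Gamma (-s) = -(Real.Gamma (1 - s) / s) := by
      rw [this]; field_simp
    rw [h2, abs_neg, abs_of_pos (by positivity)]
  have h4 : (2 : ℝ) ^ (2 * s - 1) = 4 ^ s / 2 := by
    rw [Real.rpow_sub two_pos, Real.rpow_mul two_pos.le]; norm_num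
  have h44 : (0 : ℝ) < 4 ^ s := by positivity
  unfold betaS Cns pns
  rw [h1, h4]
  field_simp

/-- dominating weight -/
def wt (n : ℕ) (s : ℝ) (h : En n) : ℝ := min 1 (‖h‖ ^ 2) * ‖h‖ ^ (-((n : ℝ) + 2 * s))

lemma wt_nonneg (n : ℕ) (s : ℝ) (h : En n) : 0 ≤ wt n s h := by unfold wt; positivity

lemma wt_integrable (n : ℕ) (hn : 1 ≤ n) (s : ℝ) (hs0 : 0 < s) (hs1 : s < 1) :
    Integrable (wt n s) := by
  have : Nonempty (Fin n) := ⟨⟨0, hn⟩⟩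
  have : Nontrivial (En n) := inferInstance
  have := (integrable_fun_norm_addHaar (volume : Measure (En n))
    (f := fun r : ℝ => min 1 (r ^ 2) * r ^ (-((n : ℝ) + 2 * s)))).2
  refine this ?_
  rw [aux_finrank]
  have hr : ∀ r : ℝ, 0 < r → r ^ (n - 1) * r ^ (-((n : ℝ) + 2 * s)) = r ^ (-1 - 2 * s) := by
    intro r hr
    rw [← Real.rpow_natCast, ← Real.rpow_add hr]
    congr 1
    push_cast [Nat.cast_sub hn]
    ring
  have hsplit : Ioi (0 : ℝ) = Ioo 0 1 ∪ Ici 1 := (Ioo_union_Ici_eq_Ioi zero_lt_one).symm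
  rw [hsplit, integrableOn_union]
  constructor
  · have h := (intervalIntegral.integrableOn_Ioo_rpow_iff (s := 1 - 2 * s) (zero_lt_one)).2
      (by linarith)
    refine h.congr_fun (fun r hr' => ?_) measurableSet_Ioo
    simp only [smul_eq_mul]
    have h1 : r ^ 2 ≤ 1 := by nlinarith [hr'.1, hr'.2]
    rw [min_eq_right h1, mul_left_comm, hr r hr'.1, ← Real.rpow_natCast, ← Real.rpow_add hr'.1]
    congr 1
    push_cast; ring
  · rw [integrableOn_Ici_iff_integrableOn_Ioi]
    have h := integrableOn_Ioi_rpow_of_lt (a := -1 - 2 * s) (c := 1) (by linarith) zero_lt_one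
    refine h.congr_fun (fun r hr' => ?_) measurableSet_Ioi
    have hr' : 1 < r := hr'
    simp only [smul_eq_mul]
    have h1 : 1 ≤ r ^ 2 := by nlinarith
    rw [min_eq_left h1, one_mul, hr r (by linarith)]

/-- second difference -/
def sd {n : ℕ} (u : En n → ℝ) (x h : En n) : ℝ := u (x + h) + u (x - h) - 2 * u x

lemma sd_bound {n : ℕ} (u : En n → ℝ) (hu : ContDiff ℝ (⊤ : ℕ∞) u) (huc : HasCompactSupport u) :
    ∃ M : ℝ, 0 ≤ M ∧ ∀ x h, |sd u x h| ≤ M * min 1 (‖h‖ ^ 2) := by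
  obtain ⟨B, hB⟩ := hu.continuous.bounded_above_of_compact_support huc
  have hB0 : 0 ≤ B := (norm_nonneg _).trans (hB 0)
  have hd : ContDiff ℝ 1 (fderiv ℝ u) := (contDiff_infty.1 hu 2).fderiv_right
    (by norm_num)
  obtain ⟨L, hL⟩ := ContDiff.lipschitzWith_of_hasCompactSupport (huc.fderiv ℝ) hd one_ne_zero
  have hdiff : Differentiable ℝ u := hu.differentiable (by simp)
  refine ⟨max (4 * B) (2 * L), by positivity, fun x h => ?_⟩
  have h1 : |sd u x h| ≤ 4 * B := by
    have a1 := abs_le.1 (hB (x + h))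
    have a2 := abs_le.1 (hB (x - h))
    have a3 := abs_le.1 (hB x)
    unfold sd
    rw [abs_le]; constructor <;> linarith [a1.1, a1.2, a2.1, a2.2, a3.1, a3.2]
  have h2 : |sd u x h| ≤ 2 * L * ‖h‖ ^ 2 := by
    have key := Convex.norm_image_sub_le_of_norm_hasFDerivWithin_le (𝕜 := ℝ)
      (f := fun k => u (x + k) + u (x - k)) (C := 2 * L * ‖h‖)
      (s := Metric.closedBall (0 : En n) ‖h‖) (x := 0) (y := h)
      (f' := fun k => fderiv ℝ u (x + k) - fderiv ℝ u (x - k)) ?_ ?_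
      (convex_closedBall _ _) (by simp) (by simp)
    · simp only [add_zero, sub_zero] at key
      rw [Real.norm_eq_abs] at key
      unfold sd
      calc _ = |u (x + h) + u (x - h) - (u x + u x)| := by congr 1; ring
        _ ≤ _ := key
        _ = _ := by ring
    · intro k _
      apply HasFDerivAt.hasFDerivWithinAt
      have e1 : HasFDerivAt (fun k => u (x + k)) (fderiv ℝ u (x + k)) k := by
        have := (hdiff (x + k)).hasFDerivAt.comp k ((hasFDerivAt_id k).const_add x)
        simpa [Function.comp_def] using this
      have e2 : HasFDerivAt (fun k => u (x - k)) (-fderiv ℝ u (x - k)) k := by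
        have := (hdiff (x - k)).hasFDerivAt.comp k ((hasFDerivAt_id k).const_sub x)
        simpa [Function.comp_def] using this
      rw [sub_eq_add_neg]
      exact e1.add e2
    · intro k hk
      have hk' : ‖k‖ ≤ ‖h‖ := by simpa using hk
      have := hL.dist_le_mul (x + k) (x - k)
      rw [dist_eq_norm, dist_eq_norm] at this
      have e : ‖x + k - (x - k)‖ ≤ 2 * ‖k‖ := by
        rw [show x + k - (x - k) = k + k by abel]
        linarith [norm_add_le k k]
      have hL0 : (0 : ℝ) ≤ L := L.2
      nlinarith
  rcases le_total 1 (‖h‖ ^ 2) with hh | hh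
  · rw [min_eq_left hh, mul_one]
    exact h1.trans (le_max_left _ _)
  · rw [min_eq_right hh]
    exact h2.trans (by gcongr; exact le_max_right _ _)

lemma symm_int {n : ℕ} (u : En n → ℝ) (hu : Continuous u) (huc : HasCompactSupport u)
    (k : En n → ℝ) (hk : Integrable k) (hev : ∀ h, k (-h) = k h) (x : En n) :
    ∫ y, k (x - y) * (u y - u x) = 1 / 2 * ∫ h, k h * sd u x h := by
  obtain ⟨B, hB⟩ := hu.bounded_above_of_compact_support huc
  have e1 : ∫ y, k (x - y) * (u y - u x) = ∫ h, k h * (u (x - h) - u x) := by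
    rw [← integral_sub_left_eq_self (fun h => k h * (u (x - h) - u x)) volume x]
    simp
  have e2 : ∫ h, k h * (u (x + h) - u x) = ∫ h, k h * (u (x - h) - u x) := by
    rw [← integral_neg_eq_self (fun h => k h * (u (x + h) - u x)) volume]
    simp [hev, sub_eq_add_neg]
  have hb : ∀ a b, ‖u a - u b‖ ≤ B + B := fun a b =>
    (norm_sub_le _ _).trans (add_le_add (hB _) (hB _))
  have i1 : Integrable (fun h => k h * (u (x + h) - u x)) :=
    hk.mul_bdd (c := B + B) (Continuous.aestronglyMeasurable (by fun_prop))
      (Eventually.of_forall fun _ => hb _ _)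
  have i2 : Integrable (fun h => k h * (u (x - h) - u x)) :=
    hk.mul_bdd (c := B + B) (Continuous.aestronglyMeasurable (by fun_prop))
      (Eventually.of_forall fun _ => hb _ _)
  have e3 : ∫ h, k h * sd u x h
      = (∫ h, k h * (u (x + h) - u x)) + ∫ h, k h * (u (x - h) - u x) := by
    rw [← integral_add i1 i2]
    congr 1; ext h; unfold sd; ring
  rw [e3, e2, e1]; ring

lemma rpow_ker_eq (n : ℕ) (s : ℝ) (h : En n) :
    (‖h‖ ^ 2) ^ (-((n : ℝ) + 2 * s) / 2) = ‖h‖ ^ (-((n : ℝ) + 2 * s)) := by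
  rw [← Real.rpow_natCast, ← Real.rpow_mul (norm_nonneg _)]
  congr 1; push_cast; ring

lemma sd_cont {n : ℕ} (u : En n → ℝ) (hu : Continuous u) (x : En n) : Continuous (sd u x) := by
  unfold sd; fun_prop

lemma sdker_integrable (n : ℕ) (hn : 1 ≤ n) (s : ℝ) (hs0 : 0 < s) (hs1 : s < 1)
    (u : En n → ℝ) (hu : Continuous u) (M : ℝ)
    (hM : ∀ x h, |sd u x h| ≤ M * min 1 (‖h‖ ^ 2)) (x : En n) :
    Integrable (fun h => ‖h‖ ^ (-((n : ℝ) + 2 * s)) * sd u x h) := by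
  refine Integrable.mono' ((wt_integrable n hn s hs0 hs1).const_mul M) ?_
    (Eventually.of_forall fun h => ?_)
  · have := sd_cont u hu x
    apply Measurable.aestronglyMeasurable
    have := this.measurable
    fun_prop
  · rw [norm_mul, Real.norm_of_nonneg (by positivity), Real.norm_eq_abs]
    calc _ ≤ ‖h‖ ^ (-((n : ℝ) + 2 * s)) * (M * min 1 (‖h‖ ^ 2)) := by gcongr; exact hM x h
      _ = _ := by unfold wt; ring

lemma fracLap_eq (n : ℕ) (hn : 1 ≤ n) (s : ℝ) (hs0 : 0 < s) (hs1 : s < 1)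
    (u : En n → ℝ) (hu : Continuous u) (huc : HasCompactSupport u) (M : ℝ)
    (hM : ∀ x h, |sd u x h| ≤ M * min 1 (‖h‖ ^ 2)) (x : En n) :
    fracLap n s u x
      = Cns n s * (-(1 / 2) * ∫ h, ‖h‖ ^ (-((n : ℝ) + 2 * s)) * sd u x h) := by
  unfold fracLap
  congr 1
  apply Tendsto.limUnder_eq
  let k : ℝ → En n → ℝ := fun ε =>
    {h : En n | ε < ‖h‖}.indicator (fun h => ‖h‖ ^ (-((n : ℝ) + 2 * s)))
  have hms : ∀ ε, MeasurableSet {h : En n | ε < ‖h‖} := fun ε =>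
    measurableSet_lt measurable_const measurable_norm
  have hkm : ∀ ε, Measurable (k ε) := fun ε => Measurable.indicator (by fun_prop) (hms ε)
  have hki : ∀ ε, 0 < ε → Integrable (k ε) := by
    intro ε hε
    have hm : 0 < min 1 (ε ^ 2) := by positivity
    refine Integrable.mono' ((wt_integrable n hn s hs0 hs1).const_mul (min 1 (ε ^ 2))⁻¹)
      (hkm ε).aestronglyMeasurable (Eventually.of_forall fun h => ?_)
    simp only [k]
    by_cases hh : h ∈ {h : En n | ε < ‖h‖}
    · have hh' : ε < ‖h‖ := hh
      rw [indicator_of_mem hh, Real.norm_of_nonneg (by positivity)]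
      unfold wt
      rw [← mul_assoc]
      apply le_mul_of_one_le_left (by positivity)
      rw [inv_mul_eq_div, one_le_div hm]
      gcongr
    · rw [indicator_of_notMem hh, norm_zero]
      have := wt_nonneg n s h
      positivity
  have hev : ∀ ε h, k ε (-h) = k ε h := by
    intro ε h; simp only [k, indicator, mem_ofPred_eq, norm_neg]
  have heq : ∀ ε, 0 < ε →
      -(1 / 2) * ∫ h, k ε h * sd u x h
      = ∫ y in {y : En n | ε < ‖x - y‖}, (u x - u y) / ‖x - y‖ ^ ((n : ℝ) + 2 * s) := by
    intro ε hε
    have h1 := symm_int u hu huc (k ε) (hki ε hε) (hev ε) x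
    rw [neg_mul, ← h1, ← integral_neg, ← integral_indicator
      (measurableSet_lt measurable_const (by fun_prop))]
    congr 1; ext y
    simp only [k, indicator, mem_ofPred_eq]
    split_ifs with hc
    · rw [Real.rpow_neg (norm_nonneg _)]; ring
    · simp
  have hlim : Tendsto (fun ε => ∫ h, k ε h * sd u x h) (𝓝[>] 0)
      (𝓝 (∫ h, ‖h‖ ^ (-((n : ℝ) + 2 * s)) * sd u x h)) := by
    refine tendsto_integral_filter_of_dominated_convergence
      (fun h => ‖‖h‖ ^ (-((n : ℝ) + 2 * s)) * sd u x h‖) ?_ ?_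
      (sdker_integrable n hn s hs0 hs1 u hu M hM x).norm ?_
    · exact Eventually.of_forall fun ε =>
        ((hkm ε).mul (sd_cont u hu x).measurable).aestronglyMeasurable
    · refine Eventually.of_forall fun ε => Eventually.of_forall fun h => ?_
      rw [norm_mul, norm_mul]
      gcongr
      exact norm_indicator_le_norm_self _ _
    · refine Eventually.of_forall fun h => ?_
      by_cases h0 : h = 0
      · subst h0
        simp [sd, two_mul]
      · have hp : 0 < ‖h‖ := norm_pos_iff.2 h0
        apply tendsto_const_nhds.congr'
        filter_upwards [nhdsWithin_le_nhds (Iio_mem_nhds hp)] with ε hε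
        simp only [k]
        rw [indicator_of_mem (show h ∈ {h : En n | ε < ‖h‖} from hε)]
  refine (hlim.const_mul (-(1 / 2))).congr' ?_
  filter_upwards [self_mem_nhdsWithin] with ε hε
  exact heq ε hε

lemma CSext_eq (n : ℕ) (s : ℝ) (hs0 : 0 < s)
    (u : En n → ℝ) (hu : Continuous u) (huc : HasCompactSupport u) (x : En n)
    (z : ℝ) (hz : 0 < z) :
    z ^ (-(2 * s)) * (CSext n s u x z - u x)
      = pns n s * (1 / 2 * ∫ h, (‖h‖ ^ 2 + z ^ 2) ^ (-((n : ℝ) + 2 * s) / 2) * sd u x h) := by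
  have hki := ker_integrable n s z hs0 hz
  have h1 := symm_int u hu huc _ hki (fun h => by simp) x
  obtain ⟨B, hB⟩ := hu.bounded_above_of_compact_support huc
  have hki' := hki.comp_sub_left x
  have hz1 : z ^ (-(2 * s)) * z ^ (2 * s) = 1 := by
    rw [← Real.rpow_add hz]; simp
  have hp : pns n s * (Real.pi ^ ((n : ℝ) / 2) * Real.Gamma s / Real.Gamma ((n : ℝ) / 2 + s)) = 1 := by
    have h0 : 0 < (n : ℝ) / 2 + s := by positivity
    have := Real.Gamma_pos_of_pos h0
    have := Real.Gamma_pos_of_pos hs0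
    have hpi : 0 < Real.pi ^ ((n : ℝ) / 2) := Real.rpow_pos_of_pos Real.pi_pos _
    unfold pns; field_simp
  have h2 : ∫ y : En n, (‖x - y‖ ^ 2 + z ^ 2) ^ (-((n : ℝ) + 2 * s) / 2) = _ :=
    (integral_sub_left_eq_self
      (fun h : En n => (‖h‖ ^ 2 + z ^ 2) ^ (-((n : ℝ) + 2 * s) / 2)) volume x).trans
      (ker_integral n s z hs0 hz)
  have i1 : Integrable (fun y => (‖x - y‖ ^ 2 + z ^ 2) ^ (-((n : ℝ) + 2 * s) / 2) * u y) :=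
    hki'.mul_bdd (c := B) hu.aestronglyMeasurable (Eventually.of_forall hB)
  rw [← h1]
  simp_rw [mul_sub]
  rw [integral_sub i1 (hki'.mul_const _), integral_mul_const, h2]
  unfold CSext Pconv Pker
  simp_rw [mul_assoc (pns n s * z ^ (2 * s))]
  rw [integral_const_mul]
  generalize (∫ y, (‖x - y‖ ^ 2 + z ^ 2) ^ (-((n : ℝ) + 2 * s) / 2) * u y) = I
  linear_combination (pns n s * I) * hz1 - (z ^ (-(2 * s)) * u x) * hp * (-1)

lemma ker_diff_tendsto (n : ℕ) (hn : 1 ≤ n) (s : ℝ) (hs0 : 0 < s) (hs1 : s < 1) :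
    Tendsto (fun z : ℝ => ∫ h : En n, min 1 (‖h‖ ^ 2) *
      |(‖h‖ ^ 2 + z ^ 2) ^ (-((n : ℝ) + 2 * s) / 2) - ‖h‖ ^ (-((n : ℝ) + 2 * s))|)
      (𝓝[>] 0) (𝓝 0) := by
  rw [show 𝓝 (0 : ℝ) = 𝓝 (∫ _ : En n, (0 : ℝ)) by simp]
  refine tendsto_integral_filter_of_dominated_convergence (wt n s) ?_ ?_
    (wt_integrable n hn s hs0 hs1) ?_
  · refine Eventually.of_forall fun z => Measurable.aestronglyMeasurable ?_
    fun_prop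
  · refine Eventually.of_forall fun z => Eventually.of_forall fun h => ?_
    by_cases h0 : h = 0
    · subst h0; simp [wt]
    have hp : 0 < ‖h‖ := norm_pos_iff.2 h0
    rw [Real.norm_of_nonneg (by positivity)]
    unfold wt
    gcongr
    have h1 : (‖h‖ ^ 2 + z ^ 2) ^ (-((n : ℝ) + 2 * s) / 2) ≤ ‖h‖ ^ (-((n : ℝ) + 2 * s)) := by
      rw [← rpow_ker_eq]
      apply Real.rpow_le_rpow_of_nonpos (by positivity) (by nlinarith [sq_nonneg z])
      have : (0 : ℝ) ≤ n := by positivity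
      linarith
    have h2 : 0 ≤ (‖h‖ ^ 2 + z ^ 2) ^ (-((n : ℝ) + 2 * s) / 2) := by positivity
    rw [abs_sub_comm, abs_of_nonneg (by linarith)]
    linarith
  · refine Eventually.of_forall fun h => ?_
    by_cases h0 : h = 0
    · subst h0; simp
    have hp : 0 < ‖h‖ := norm_pos_iff.2 h0
    have hc : ContinuousAt (fun z : ℝ => min 1 (‖h‖ ^ 2) *
      |(‖h‖ ^ 2 + z ^ 2) ^ (-((n : ℝ) + 2 * s) / 2) - ‖h‖ ^ (-((n : ℝ) + 2 * s))|) 0 := by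
      have : ContinuousAt (fun z : ℝ => (‖h‖ ^ 2 + z ^ 2) ^ (-((n : ℝ) + 2 * s) / 2)) 0 := by
        apply ContinuousAt.rpow_const (by fun_prop)
        left; positivity
      fun_prop
    have := hc.tendsto
    simp only [ne_eq, OfNat.ofNat_ne_zero, not_false_eq_true, zero_pow, add_zero, rpow_ker_eq,
      sub_self, abs_zero, mul_zero] at this
    exact this.mono_left nhdsWithin_le_nhds

/-- **Uniform first-order expansion of the CS extension** (Euclidean case): for every compact
`K ⊂ ℝⁿ`, `z^{-2s}(U(·,z) - u) → -(2sβ_s)^{-1}(-Δ)^s u` uniformly on `K` as `z → 0⁺`; i.e.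
`U(x,z) = u(x) - (z^{2s}/(2sβ_s))(-Δ)^s u(x) + o(z^{2s})` uniformly on compact sets. -/
theorem CSext_uniform_expansion (n : ℕ) (hn : 1 ≤ n) (s : ℝ) (hs0 : 0 < s) (hs1 : s < 1)
    (u : En n → ℝ) (hu : ContDiff ℝ (⊤ : ℕ∞) u) (huc : HasCompactSupport u) :
    ∀ K : Set (En n), IsCompact K →
      TendstoUniformlyOn
        (fun (z : ℝ) (x : En n) => z ^ (-(2 * s)) * (CSext n s u x z - u x))
        (fun x => -(1 / (2 * s * betaS s)) * fracLap n s u x)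
        (𝓝[>] (0 : ℝ)) K := by
  intro K _
  obtain ⟨M, hM0, hM⟩ := sd_bound u hu huc
  have huk := hu.continuous
  rw [Metric.tendstoUniformlyOn_iff]
  intro ε hε
  have hlim := ((ker_diff_tendsto n hn s hs0 hs1).const_mul (|pns n s| * (1 / 2) * M))
  rw [mul_zero] at hlim
  filter_upwards [self_mem_nhdsWithin, hlim.eventually (gt_mem_nhds hε)] with z hz hlt x _
  have hz : 0 < z := hz
  refine lt_of_le_of_lt ?_ hlt
  rw [CSext_eq n s hs0 u huk huc x z hz, fracLap_eq n hn s hs0 hs1 u huk huc M hM x]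
  have hk1 := sdker_integrable n hn s hs0 hs1 u huk M hM x
  obtain ⟨B, hB⟩ : ∃ B, ∀ h, ‖sd u x h‖ ≤ B :=
    ⟨M, fun h => (hM x h).trans (mul_le_of_le_one_right hM0 (min_le_left _ _))⟩
  have hk2 : Integrable
      (fun h => (‖h‖ ^ 2 + z ^ 2) ^ (-((n : ℝ) + 2 * s) / 2) * sd u x h) :=
    (ker_integrable n s z hs0 hz).mul_bdd (c := B)
      (sd_cont u huk x).aestronglyMeasurable (Eventually.of_forall hB)
  have hd : Integrable (fun h : En n => min 1 (‖h‖ ^ 2) *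
      |(‖h‖ ^ 2 + z ^ 2) ^ (-((n : ℝ) + 2 * s) / 2) - ‖h‖ ^ (-((n : ℝ) + 2 * s))|) := by
    have hw := wt_integrable n hn s hs0 hs1
    have hk3 : Integrable (fun h : En n =>
        (‖h‖ ^ 2 + z ^ 2) ^ (-((n : ℝ) + 2 * s) / 2) * min 1 (‖h‖ ^ 2)) :=
      (ker_integrable n s z hs0 hz).mul_bdd (c := 1)
        (Continuous.aestronglyMeasurable (by fun_prop)) (Eventually.of_forall fun h => by
          rw [Real.norm_of_nonneg (by positivity)]; exact min_le_left _ _)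
    refine (hk3.sub hw).abs.congr (Eventually.of_forall fun h => ?_)
    simp only [Pi.sub_apply, wt]
    rw [mul_comm _ (min _ _), ← mul_sub, abs_mul, abs_of_nonneg (a := min _ _) (by positivity)]
  rw [dist_comm, dist_eq_norm]
  have e : pns n s * (1 / 2 * ∫ h, (‖h‖ ^ 2 + z ^ 2) ^ (-((n : ℝ) + 2 * s) / 2) * sd u x h) -
      -(1 / (2 * s * betaS s)) *
        (Cns n s * (-(1 / 2) * ∫ h, ‖h‖ ^ (-((n : ℝ) + 2 * s)) * sd u x h))
      = pns n s * (1 / 2) * ∫ h, ((‖h‖ ^ 2 + z ^ 2) ^ (-((n : ℝ) + 2 * s) / 2) * sd u x h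
          - ‖h‖ ^ (-((n : ℝ) + 2 * s)) * sd u x h) := by
    rw [integral_sub hk2 hk1, ← const_id n s hs0 hs1]
    ring
  rw [e, norm_mul, norm_mul, Real.norm_eq_abs (pns n s), Real.norm_of_nonneg (by norm_num : (0 : ℝ) ≤ 1 / 2),
    mul_assoc _ M]
  gcongr
  rw [← integral_const_mul]
  refine norm_integral_le_of_norm_le (hd.const_mul M) (Eventually.of_forall fun h => ?_)
  rw [← sub_mul, norm_mul, Real.norm_eq_abs, Real.norm_eq_abs, ← mul_assoc, mul_comm]
  gcongr
  exact hM x h
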